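/- arXiv:2202.05990 — 3 statements merged into one kernel-verified Lean document; each statement's English description precedes it below -/
import Mathlib

section
/- Convergence of the in-H-index to k_max (Theorem 4.1): for every finite directed graph G and every vertex v, the non-increasing sequence n ↦ iH_G^(n)(v) is eventually constant, and its eventual value equals k_max(v), i.e., k_max(v) = iH_G^(∞)(v). -/
open Finset

variable {V : Type*} [Fintype V] [DecidableEq V]

/-- The in-neighbors of `v` within `S`: vertices `u ∈ S` with an edge `u → v`. -/
def inN (E : V → V → Prop) [DecidableRel E] (S : Finset V) (v : V) : Finset V :=
  S.filter (fun u => E u v)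

/-- The out-neighbors of `v` within `S`: vertices `u ∈ S` with an edge `v → u`. -/
def outN (E : V → V → Prop) [DecidableRel E] (S : Finset V) (v : V) : Finset V :=
  S.filter (fun u => E v u)

/-- `S` satisfies the `(k,l)`-degree constraints: every `v ∈ S` has at least `k`
in-neighbors in `S` and at least `l` out-neighbors in `S`. -/
def satisfiesKL (E : V → V → Prop) [DecidableRel E] (k l : ℕ) (S : Finset V) : Prop :=
  ∀ v ∈ S, k ≤ (inN E S v).card ∧ l ≤ (outN E S v).card

instance (E : V → V → Prop) [DecidableRel E] (k l : ℕ) (S : Finset V) :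
    Decidable (satisfiesKL E k l S) := by unfold satisfiesKL; infer_instance

/-- The `(k,l)`-core of the graph: the union of all vertex subsets satisfying the
`(k,l)`-degree constraints. -/
def core (E : V → V → Prop) [DecidableRel E] (k l : ℕ) : Finset V :=
  (Finset.univ.powerset.filter (satisfiesKL E k l)).sup id

/-- `kmax E v`: the largest `k` such that `v` belongs to the `(k,0)`-core. -/
noncomputable def kmax (E : V → V → Prop) [DecidableRel E] (v : V) : ℕ :=
  sSup {k : ℕ | v ∈ core E k 0}

/-- `lmax E v k`: the largest `l` such that `v` belongs to the `(k,l)`-core. -/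
noncomputable def lmax (E : V → V → Prop) [DecidableRel E] (v : V) (k : ℕ) : ℕ :=
  sSup {l : ℕ | v ∈ core E k l}

/-- The H-index of a finite multiset of naturals: the largest `h` such that at least
`h` elements (with multiplicity) are `≥ h`. -/
noncomputable def hIndex (M : Multiset ℕ) : ℕ :=
  sSup {h : ℕ | h ≤ (M.filter (fun x => h ≤ x)).card}

/-- The `n`-order in-H-index of a vertex `v` in the graph with vertex set `S`
and edge relation `E`. -/
noncomputable def iH (E : V → V → Prop) [DecidableRel E] (S : Finset V) : ℕ → V → ℕ
  | 0 => fun v => (inN E S v).card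
  | n + 1 => fun v => hIndex ((inN E S v).val.map (iH E S n))

/-- The `n`-order out-H-index of a vertex `v` in the graph with vertex set `S`
and edge relation `E`. -/
noncomputable def oH (E : V → V → Prop) [DecidableRel E] (S : Finset V) : ℕ → V → ℕ
  | 0 => fun v => (outN E S v).card
  | n + 1 => fun v => hIndex ((outN E S v).val.map (oH E S n))

/-- The eventual (limit) value of the in-H-index sequence. -/
noncomputable def iHlim (E : V → V → Prop) [DecidableRel E] (S : Finset V) (v : V) : ℕ :=
  ⨅ n, iH E S n v

/-- The eventual (limit) value of the out-H-index sequence. -/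
noncomputable def oHlim (E : V → V → Prop) [DecidableRel E] (S : Finset V) (v : V) : ℕ :=
  ⨅ n, oH E S n v

/-- `(k,l)` is a skyline coreness of `v`: `v` is in the `(k,l)`-core and there is no
pair `(k',l')` strictly dominating `(k,l)` with `v` in the `(k',l')`-core. -/
def skyline (E : V → V → Prop) [DecidableRel E] (v : V) (p : ℕ × ℕ) : Prop :=
  v ∈ core E p.1 p.2 ∧
    ¬ ∃ q : ℕ × ℕ, (p.1 ≤ q.1 ∧ p.2 ≤ q.2 ∧ p ≠ q) ∧ v ∈ core E q.1 q.2

theorem le_hIndex_iff (s : Finset V) (f : V → ℕ) (k : ℕ) :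
    k ≤ hIndex (s.val.map f) ↔ k ≤ (s.filter (fun u => k ≤ f u)).card := by
  have key : ∀ h : ℕ, ((s.val.map f).filter (fun x => h ≤ x)).card
      = (s.filter (fun u => h ≤ f u)).card := by
    intro h
    rw [Multiset.filter_map, Multiset.card_map]
    rfl
  unfold hIndex
  simp only [key]
  have hb : BddAbove {h : ℕ | h ≤ (s.filter (fun u => h ≤ f u)).card} :=
    ⟨s.card, fun h hh => le_trans hh (Finset.card_filter_le _ _)⟩
  constructor
  · intro hk
    have hm := Nat.sSup_mem ⟨0, by simp⟩ hb
    refine le_trans hk (le_trans hm (Finset.card_le_card ?_))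
    intro u hu
    simp only [Finset.mem_filter] at hu ⊢
    exact ⟨hu.1, le_trans hk hu.2⟩
  · intro hk
    exact le_csSup hb hk

theorem mem_core_iff (E : V → V → Prop) [DecidableRel E] (k : ℕ) (v : V) :
    v ∈ core E k 0 ↔ ∃ S : Finset V, (∀ u ∈ S, k ≤ (inN E S u).card) ∧ v ∈ S := by
  unfold core
  simp [Finset.mem_sup, satisfiesKL]

theorem iH_succ_le (E : V → V → Prop) [DecidableRel E] (n : ℕ) :
    ∀ v : V, iH E Finset.univ (n + 1) v ≤ iH E Finset.univ n v := by
  induction n with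
  | zero =>
    intro v
    have h := (le_hIndex_iff (inN E Finset.univ v) (iH E Finset.univ 0)
      (iH E Finset.univ 1 v)).1 le_rfl
    exact le_trans h (Finset.card_filter_le _ _)
  | succ n ih =>
    intro v
    have h := (le_hIndex_iff (inN E Finset.univ v) (iH E Finset.univ (n + 1))
      (iH E Finset.univ (n + 2) v)).1 le_rfl
    refine (le_hIndex_iff (inN E Finset.univ v) (iH E Finset.univ n) _).2
      (le_trans h (Finset.card_le_card ?_))
    intro u hu
    simp only [Finset.mem_filter] at hu ⊢
    exact ⟨hu.1, le_trans hu.2 (ih u)⟩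

theorem le_iH_of_sat (E : V → V → Prop) [DecidableRel E] (k : ℕ) (S : Finset V)
    (hS : ∀ u ∈ S, k ≤ (inN E S u).card) (n : ℕ) :
    ∀ v ∈ S, k ≤ iH E Finset.univ n v := by
  induction n with
  | zero =>
    intro v hv
    exact le_trans (hS v hv)
      (Finset.card_le_card (Finset.filter_subset_filter _ (Finset.subset_univ S)))
  | succ n ih =>
    intro v hv
    refine (le_hIndex_iff (inN E Finset.univ v) (iH E Finset.univ n) k).2
      (le_trans (hS v hv) (Finset.card_le_card ?_))
    intro u hu
    simp only [inN, Finset.mem_filter, Finset.mem_univ, true_and] at hu ⊢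
    exact ⟨hu.2, ih u hu.1⟩

theorem iH_eventually (E : V → V → Prop) [DecidableRel E] :
    ∃ N : ℕ, ∀ n : ℕ, N ≤ n → ∀ v : V, iH E Finset.univ n v = iHlim E Finset.univ v := by
  have h : ∀ v : V, ∃ N : ℕ, iH E Finset.univ N v = iHlim E Finset.univ v := fun v =>
    Nat.sInf_mem (Set.range_nonempty (fun n => iH E Finset.univ n v))
  choose N hN using h
  refine ⟨Finset.univ.sup N, fun n hn v => le_antisymm ?_ ?_⟩
  · rw [← hN v]
    exact antitone_nat_of_succ_le (f := fun n => iH E Finset.univ n v)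
      (fun n => iH_succ_le E n v) (le_trans (Finset.le_sup (Finset.mem_univ v)) hn)
  · exact ciInf_le (OrderBot.bddBelow _) n

/-- **Theorem 4.1: Convergence of the in-H-index to `kmax`.** The
non-increasing sequence `n ↦ iH_G^(n)(v)` is eventually constant with eventual value
`iH_G^(∞)(v)`, and `kmax v = iH_G^(∞)(v)`. -/
theorem kmax_eq_iHlim (E : V → V → Prop) [DecidableRel E] (v : V) :
    (∀ n : ℕ, iH E Finset.univ (n + 1) v ≤ iH E Finset.univ n v) ∧
    (∃ N : ℕ, ∀ n : ℕ, N ≤ n → iH E Finset.univ n v = iHlim E Finset.univ v) ∧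
    kmax E v = iHlim E Finset.univ v := by
  obtain ⟨N, hN⟩ := iH_eventually E
  refine ⟨fun n => iH_succ_le E n v, ⟨N, fun n hn => hN n hn v⟩, ?_⟩
  refine IsGreatest.csSup_eq ⟨?_, ?_⟩
  · refine (mem_core_iff E _ v).2
      ⟨Finset.univ.filter (fun u => iHlim E Finset.univ v ≤ iHlim E Finset.univ u), ?_, by simp⟩
    intro u hu
    have hu' := (Finset.mem_filter.1 hu).2
    rw [← hN (N + 1) (Nat.le_succ N) u] at hu'
    refine le_trans ((le_hIndex_iff (inN E Finset.univ u) (iH E Finset.univ N) _).1 hu')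
      (Finset.card_le_card ?_)
    intro w hw
    simp only [inN, Finset.mem_filter, Finset.mem_univ, true_and] at hw ⊢
    rw [hN N le_rfl w] at hw
    exact ⟨hw.2, hw.1⟩
  · intro k hk
    obtain ⟨S, hS, hv⟩ := (mem_core_iff E k v).1 hk
    rw [← hN N le_rfl v]
    exact le_iH_of_sat E k S hS N v hv
end

section
/- Upper bound on l_max via the out-H-index on G[k] (Theorem 4.2): let G be a finite directed graph, v a vertex, and k a natural number with k ≤ k_max(v). Let G[k] be the subgraph of G induced by the vertex set V_k = {u ∈ V : k_max(u) ≥ k}. Then l_max(v,k) ≤ oH_{G[k]}^(∞)(v), the eventual value of the non-increasing sequence n ↦ oH_{G[k]}^(n)(v). -/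
open Finset

variable {V : Type*} [Fintype V] [DecidableEq V]

/-- The vertex set `V_k = {u : kmax(u) ≥ k}` of the induced subgraph `G[k]`. -/
noncomputable def Vk (E : V → V → Prop) [DecidableRel E] (k : ℕ) : Finset V :=
  @Finset.filter _ (fun u => k ≤ kmax E u) (Classical.decPred _) Finset.univ

theorem hIndex_bdd (M : Multiset ℕ) :
    BddAbove {h : ℕ | h ≤ (M.filter (fun x => h ≤ x)).card} :=
  ⟨M.card, fun _ hh => le_trans hh (Multiset.card_le_card (Multiset.filter_le _ _))⟩

theorem le_hIndex_of (M : Multiset ℕ) (h : ℕ)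
    (hh : h ≤ (M.filter (fun x => h ≤ x)).card) : h ≤ hIndex M :=
  le_csSup (hIndex_bdd M) hh

theorem hIndex_spec (M : Multiset ℕ) :
    hIndex M ≤ (M.filter (fun x => hIndex M ≤ x)).card :=
  Nat.sSup_mem (s := {h : ℕ | h ≤ (M.filter (fun x => h ≤ x)).card})
    ⟨0, Nat.zero_le _⟩ (hIndex_bdd M)

theorem card_filter_map_aux {W : Type*} (A : Finset W) (f : W → ℕ) (h : ℕ) :
    ((A.val.map f).filter (fun x => h ≤ x)).card = (A.filter (fun u => h ≤ f u)).card := by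
  rw [Multiset.filter_map, Multiset.card_map]
  rfl

theorem hIndex_map_mono {W : Type*} (A : Finset W) (f g : W → ℕ) (hfg : ∀ u, f u ≤ g u) :
    hIndex (A.val.map f) ≤ hIndex (A.val.map g) := by
  apply le_hIndex_of
  refine le_trans (hIndex_spec _) ?_
  rw [card_filter_map_aux, card_filter_map_aux]
  apply Finset.card_le_card
  intro u hu
  rw [Finset.mem_filter] at hu ⊢
  exact ⟨hu.1, hu.2.trans (hfg u)⟩

theorem oH_succ_le (E : V → V → Prop) [DecidableRel E] (S : Finset V) (n : ℕ) :
    ∀ u, oH E S (n + 1) u ≤ oH E S n u := by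
  induction n with
  | zero =>
    intro u
    refine le_trans (hIndex_spec _) ?_
    rw [card_filter_map_aux]
    exact Finset.card_filter_le _ _
  | succ n ih => exact fun u => hIndex_map_mono _ _ _ ih

theorem mem_core_iff_aux (E : V → V → Prop) [DecidableRel E] (k l : ℕ) (v : V) :
    v ∈ core E k l ↔ ∃ T : Finset V, satisfiesKL E k l T ∧ v ∈ T := by
  simp [core, Finset.mem_sup]

theorem le_kmax_aux (E : V → V → Prop) [DecidableRel E] (k : ℕ) (v : V)
    (h : v ∈ core E k 0) : k ≤ kmax E v := by
  refine le_csSup ⟨Fintype.card V, ?_⟩ h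
  intro j hj
  obtain ⟨T, hT, hv⟩ := (mem_core_iff_aux E j 0 v).1 hj
  exact (hT v hv).1.trans (Finset.card_le_univ _)

theorem le_oH_aux (E : V → V → Prop) [DecidableRel E] (k l : ℕ) (S T : Finset V)
    (hT : satisfiesKL E k l T) (hTS : T ⊆ S) (n : ℕ) : ∀ u ∈ T, l ≤ oH E S n u := by
  induction n with
  | zero =>
    intro u hu
    exact (hT u hu).2.trans (Finset.card_le_card (Finset.filter_subset_filter _ hTS))
  | succ n ih =>
    intro u hu
    apply le_hIndex_of
    rw [card_filter_map_aux]
    refine (hT u hu).2.trans (Finset.card_le_card ?_)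
    intro w hw
    simp only [outN, Finset.mem_filter] at hw ⊢
    exact ⟨⟨hTS hw.1, hw.2⟩, ih w hw.1⟩

/-- **Theorem 4.2.** For `k ≤ kmax v`, the sequence `n ↦ oH_{G[k]}^(n)(v)`
is eventually constant and `lmax(v,k)` is at most its eventual value. -/
theorem lmax_le_oHlim_Gk (E : V → V → Prop) [DecidableRel E]
    (v : V) (k : ℕ) (hk : k ≤ kmax E v) :
    (∃ N : ℕ, ∀ n : ℕ, N ≤ n → oH E (Vk E k) n v = oHlim E (Vk E k) v) ∧
    lmax E v k ≤ oHlim E (Vk E k) v := by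
  have hanti : Antitone (fun n => oH E (Vk E k) n v) :=
    antitone_nat_of_succ_le (fun n => oH_succ_le E (Vk E k) n v)
  constructor
  · obtain ⟨N, hN⟩ := Nat.sInf_mem (Set.range_nonempty (fun n => oH E (Vk E k) n v))
    refine ⟨N, fun n hn => le_antisymm ?_ ?_⟩
    · exact (hanti hn).trans (le_of_eq hN)
    · exact ciInf_le (OrderBot.bddBelow _) n
  · apply csSup_le'
    intro l hl
    obtain ⟨T, hT, hv⟩ := (mem_core_iff_aux E k l v).1 hl
    refine le_ciInf fun n => le_oH_aux E k l _ T hT ?_ n v hv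
    intro u hu
    simp only [Vk, Finset.mem_filter, Finset.mem_univ, true_and]
    exact le_kmax_aux E k u ((mem_core_iff_aux E k 0 u).2
      ⟨T, fun w hw => ⟨(hT w hw).1, Nat.zero_le _⟩, hu⟩)
end

section
/- Property 5.1(III): let G be a finite directed graph, v a vertex, and (k_v, l_v) a skyline coreness of v. Then it cannot simultaneously hold that v has at least k_v in-neighbors v' each having a skyline coreness (k',l') with k_v ≤ k' and l_v + 1 ≤ l', and that v has at least l_v + 1 out-neighbors v'' each having a skyline coreness (k'',l'') with k_v ≤ k'' and l_v + 1 ≤ l''. -/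
open Finset

variable {V : Type*} [Fintype V] [DecidableEq V]

theorem aux_mem_core (E : V → V → Prop) [DecidableRel E] (k l : ℕ) (v : V) :
    v ∈ core E k l ↔ ∃ S, satisfiesKL E k l S ∧ v ∈ S := by
  simp [core, Finset.mem_sup]

theorem aux_mono (E : V → V → Prop) [DecidableRel E] {k l k' l' : ℕ} (hk : k ≤ k')
    (hl : l ≤ l') {v : V} (h : v ∈ core E k' l') : v ∈ core E k l := by
  rw [aux_mem_core] at h ⊢
  obtain ⟨S, hS, hv⟩ := h
  exact ⟨S, fun u hu => ⟨hk.trans (hS u hu).1, hl.trans (hS u hu).2⟩, hv⟩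

theorem aux_deg (E : V → V → Prop) [DecidableRel E] {k l : ℕ} {v : V} {T : Finset V}
    (hT : core E k l ⊆ T) (h : v ∈ core E k l) :
    k ≤ (inN E T v).card ∧ l ≤ (outN E T v).card := by
  obtain ⟨S, hS, hv⟩ := (aux_mem_core E k l v).1 h
  have hST : S ⊆ T := fun u hu => hT ((aux_mem_core E k l u).2 ⟨S, hS, hu⟩)
  exact ⟨(hS v hv).1.trans (Finset.card_le_card (Finset.filter_subset_filter _ hST)),
    (hS v hv).2.trans (Finset.card_le_card (Finset.filter_subset_filter _ hST))⟩

/-- **Property 5.1(III).** If `(kv,lv)` is a skyline coreness of `v`, then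
it cannot hold simultaneously that `v` has `kv` in-neighbors with a skyline coreness
dominating `(kv, lv+1)` and `lv + 1` out-neighbors with a skyline coreness dominating
`(kv, lv+1)`. -/
theorem skyline_neighbor_property_III (E : V → V → Prop) [DecidableRel E]
    (v : V) (kv lv : ℕ) (h : skyline E v (kv, lv)) :
    ¬(kv ≤
        Set.ncard {u : V | E u v ∧ ∃ p : ℕ × ℕ, skyline E u p ∧ kv ≤ p.1 ∧ lv + 1 ≤ p.2} ∧
      lv + 1 ≤
        Set.ncard {u : V | E v u ∧ ∃ p : ℕ × ℕ, skyline E u p ∧ kv ≤ p.1 ∧ lv + 1 ≤ p.2}) := by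
  rintro ⟨h1, h2⟩
  refine h.2 ⟨(kv, lv + 1), ⟨le_refl _, Nat.le_succ _, by simp⟩, ?_⟩
  refine (aux_mem_core E kv (lv + 1) v).2
    ⟨insert v (core E kv (lv + 1)), ?_, Finset.mem_insert_self _ _⟩
  intro u hu
  rcases Finset.mem_insert.1 hu with rfl | hu
  · constructor
    · refine h1.trans ?_
      rw [← Set.ncard_coe_finset]
      refine Set.ncard_le_ncard ?_ (Finset.finite_toSet _)
      rintro w ⟨hw, p, hp, hk, hl⟩
      exact Finset.mem_coe.2 (Finset.mem_filter.2
        ⟨Finset.mem_insert_of_mem (aux_mono E hk hl hp.1), hw⟩)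
    · refine h2.trans ?_
      rw [← Set.ncard_coe_finset]
      refine Set.ncard_le_ncard ?_ (Finset.finite_toSet _)
      rintro w ⟨hw, p, hp, hk, hl⟩
      exact Finset.mem_coe.2 (Finset.mem_filter.2
        ⟨Finset.mem_insert_of_mem (aux_mono E hk hl hp.1), hw⟩)
  · exact aux_deg E (Finset.subset_insert _ _) hu
end
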